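/- Let n ≥ 2 and let w = (b a^{n−1})^{n−2} b be the reset word of the Černý automaton C_n of length (n−1)². For every 1 ≤ j ≤ (n−1)², let w_j denote the suffix of w of length j. Then the preimage of the singleton {0} under the map δ_{w_j} has cardinality exactly 2 + ⌊(j−1)/n⌋. In particular, for j = (n−1)² this preimage is all of Z_n, and the cardinalities of these preimages increase by exactly 1 at each position j ≡ 1 (mod n) and otherwise stay constant along the suffixes. -/

import Mathlib

/-- The two-letter alphabet of the Černý automaton. -/
inductive Letter
  | a
  | b
deriving DecidableEq

/-- The action of a letter of the Černý automaton `C_n` on the state set `ZMod n`: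
`a` sends `i` to `i + 1 (mod n)`, and `b` sends `n - 1` to `0` and fixes every other state. -/
def step (n : ℕ) : Letter → ZMod n → ZMod n
  | Letter.a, p => p + 1
  | Letter.b, p => if p = -1 then 0 else p

/-- The map `δ_w` induced by a word `w`, applying letters left to right. -/
def run (n : ℕ) : List Letter → ZMod n → ZMod n
  | [], p => p
  | x :: w, p => run n w (step n x p)

/-- The word `(b a^{n-1})^{n-2} b`: `n - 2` repetitions of the block consisting of one
`b` followed by `n - 1` copies of `a`, followed by one final `b`. -/
def cernyWord (n : ℕ) : List Letter :=
  (List.replicate (n - 2) (Letter.b :: List.replicate (n - 1) Letter.a)).flatten ++ [Letter.b]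

def cBlock (n : ℕ) : List Letter := Letter.b :: List.replicate (n - 1) Letter.a

def cW (n k : ℕ) : List Letter := (List.replicate k (cBlock n)).flatten ++ [Letter.b]

theorem run_append (n : ℕ) (u v : List Letter) (p : ZMod n) :
    run n (u ++ v) p = run n v (run n u p) := by
  induction u generalizing p with
  | nil => rfl
  | cons x u ih => simp [run, ih]

theorem run_rep (n r : ℕ) (p : ZMod n) :
    run n (List.replicate r Letter.a) p = p + r := by
  induction r generalizing p with
  | zero => simp [run]
  | succ r ih =>
    rw [List.replicate_succ, run, ih, step]
    push_cast
    ring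

theorem val_succ_aux (n : ℕ) (hn : 2 ≤ n) (p : ZMod n) (h : p ≠ -1) :
    (p + 1).val = p.val + 1 := by
  have : NeZero n := ⟨by omega⟩
  have : Fact (1 < n) := ⟨by omega⟩
  have hlt := p.val_lt
  have h1 : p.val + 1 ≠ n := by
    intro h2
    apply h
    have h3 : ((p.val + 1 : ℕ) : ZMod n) = 0 := by rw [h2]; simp
    push_cast at h3
    rw [ZMod.natCast_zmod_val] at h3
    exact eq_neg_of_add_eq_zero_left h3
  rw [ZMod.val_add_of_lt, ZMod.val_one]
  rw [ZMod.val_one]; omega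

theorem run_cW (n : ℕ) (hn : 2 ≤ n) (k : ℕ) (p : ZMod n) :
    run n (cW n k) p = 0 ↔ (p + 1).val ≤ k + 1 := by
  have : NeZero n := ⟨by omega⟩
  induction k generalizing p with
  | zero =>
    simp only [cW, List.replicate_zero, List.flatten_nil, List.nil_append, run, step]
    by_cases h : p = -1
    · simp [h]
    · rw [if_neg h, val_succ_aux n hn p h, ← ZMod.val_eq_zero]
      omega
  | succ k ih =>
    have e : cW n (k+1) = Letter.b :: (List.replicate (n - 1) Letter.a ++ cW n k) := by
      simp [cW, cBlock, List.replicate_succ]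
    rw [e, run, run_append, run_rep]
    refine Iff.trans (ih _) ?_
    have e2 : step n Letter.b p + ((n - 1 : ℕ) : ZMod n) + 1 = step n Letter.b p := by
      rw [Nat.cast_sub (by omega)]
      simp
    rw [e2, step]
    by_cases h : p = -1
    · simp [h]
    · rw [if_neg h, val_succ_aux n hn p h]
      omega

theorem drop_aux (n : ℕ) (hn : 2 ≤ n) (k r m : ℕ) (hr : r < n)
    (h : m + (1 + n * k + r) = n * (n - 2) + 1) :
    (cernyWord n).drop m = List.replicate r Letter.a ++ cW n k := by
  have hc : cernyWord n = cW n (n - 2) := rfl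
  have hlen : (cBlock n).length = n := by simp [cBlock]; omega
  rw [hc]
  have hk : k ≤ n - 2 := by
    by_contra hh
    have : n * (n - 2 + 1) ≤ n * k := Nat.mul_le_mul_left _ (by omega)
    rw [Nat.mul_add] at this
    omega
  obtain ⟨d, hd⟩ := Nat.exists_eq_add_of_le' hk
  rw [hd] at h ⊢
  rw [Nat.mul_add] at h
  rcases Nat.eq_zero_or_pos r with h0 | h0
  · subst h0
    have e : cW n (d + k) = (List.replicate d (cBlock n)).flatten ++ cW n k := by
      simp only [cW, List.replicate_add, List.flatten_append, List.append_assoc,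
        List.replicate_one, List.flatten_singleton]
    rw [e]
    simp only [List.replicate_zero, List.nil_append]
    apply List.drop_left'
    simp [hlen, Nat.mul_comm d n]
    omega
  · rcases d with _ | d
    · omega
    have e : cW n (d + 1 + k) = ((List.replicate d (cBlock n)).flatten ++
        Letter.b :: List.replicate (n - 1 - r) Letter.a) ++
        (List.replicate r Letter.a ++ cW n k) := by
      have : cBlock n = Letter.b ::
          (List.replicate (n - 1 - r) Letter.a ++ List.replicate r Letter.a) := by
        rw [List.replicate_append_replicate, cBlock]
        congr 2
        omega
      have e1 : cW n (d + 1 + k) = (List.replicate d (cBlock n)).flatten ++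
          (cBlock n ++ cW n k) := by
        simp only [cW, List.replicate_add, List.flatten_append, List.append_assoc,
        List.replicate_one, List.flatten_singleton]
      rw [e1]
      conv_lhs => rw [show cBlock n ++ cW n k = (Letter.b ::
          (List.replicate (n - 1 - r) Letter.a ++ List.replicate r Letter.a)) ++ cW n k by
            rw [← this]]
      simp only [List.append_assoc, List.cons_append]
    rw [e]
    apply List.drop_left'
    rw [Nat.mul_add] at h
    simp [hlen, Nat.mul_comm d n]
    omega

/-- For `n ≥ 2` and the reset word `w = (b a^{n-1})^{n-2} b` of length `(n - 1)²` of the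
Černý automaton `C_n`: for every `1 ≤ j ≤ (n - 1)²`, the preimage of `{0}` under the map
induced by the suffix of `w` of length `j` has exactly `2 + (j - 1) / n` elements. -/
theorem cerny_word_suffix_preimage_card (n : ℕ) (hn : 2 ≤ n) (j : ℕ)
    (hj1 : 1 ≤ j) (hj2 : j ≤ (n - 1) ^ 2) :
    {p : ZMod n | run n ((cernyWord n).drop ((n - 1) ^ 2 - j)) p = 0}.ncard
      = 2 + (j - 1) / n := by
  have : NeZero n := ⟨by omega⟩
  have hsq : (n - 1) ^ 2 = n * (n - 2) + 1 := by
    obtain ⟨t, rfl⟩ := Nat.exists_eq_add_of_le' hn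
    simp only [Nat.add_sub_cancel, show t + 2 - 1 = t + 1 by omega]
    ring
  have hdm := Nat.div_add_mod (j - 1) n
  have hr : (j - 1) % n < n := Nat.mod_lt _ (by omega)
  generalize (j - 1) / n = k at *
  generalize (j - 1) % n = r at *
  rw [drop_aux n hn k r _ hr (by omega)]
  have hk : k + 2 ≤ n := by
    by_contra hh
    have : n * (n - 2 + 1) ≤ n * k := Nat.mul_le_mul_left _ (by omega)
    rw [Nat.mul_add] at this
    omega
  have hS : {p : ZMod n | run n (List.replicate r Letter.a ++ cW n k) p = 0} =
      (fun i : ℕ => (i : ZMod n) - r - 1) '' (Finset.range (k + 2) : Set ℕ) := by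
    ext p
    simp only [Set.mem_setOf_eq, run_append, run_rep, run_cW n hn, Set.mem_image,
      Finset.coe_range, Set.mem_Iio]
    constructor
    · intro h
      refine ⟨(p + r + 1).val, by omega, ?_⟩
      rw [ZMod.natCast_zmod_val]
      ring
    · rintro ⟨i, hi, rfl⟩
      have : (i : ZMod n) - r - 1 + r + 1 = i := by ring
      rw [this, ZMod.val_natCast_of_lt (by omega)]
      omega
  rw [hS, Set.ncard_image_of_injOn, Set.ncard_coe_finset, Finset.card_range]
  · omega
  · intro x hx y hy hxy
    simp only [Finset.coe_range, Set.mem_Iio] at hx hy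
    have h1 : (x : ZMod n) = y := by simpa using hxy
    have h2 := congrArg ZMod.val h1
    rwa [ZMod.val_natCast_of_lt (by omega), ZMod.val_natCast_of_lt (by omega)] at h2
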